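/- arXiv:2104.13222 — 4 statements merged into one kernel-verified Lean document; each statement's English description precedes it below -/
import Mathlib

section
/- Fix n ≥ 1 and let F = {C_3, C_5, ..., C_{2n+1}} be the family of all odd cycles of length at most 2n+1. The class K(F) of all finite graphs containing no odd cycle of length at most 2n+1 (equivalently, admitting no injective graph homomorphism from any C_{2k+1} with 1 ≤ k ≤ n) has the weak amalgamation property. -/
open SimpleGraph

/-- `A` is contained in `G`: there is an injective graph homomorphism from `A` to `G`. -/
def Contains {V W : Type} (A : SimpleGraph V) (G : SimpleGraph W) : Prop :=
  ∃ f : A →g G, Function.Injective f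

/-- The class of finite graphs satisfying `P` has the weak amalgamation property (WAP):
for every finite `A` with `P A` there are a finite `A'` with `P A'` and a graph embedding
`i : A ↪g A'` such that any two finite extensions `B`, `C` of `A'` in the class
amalgamate over (the image of) `A`. -/
def GraphWAP (P : ∀ α : Type, SimpleGraph α → Prop) : Prop :=
  ∀ (α : Type) [Fintype α], ∀ A : SimpleGraph α, P α A →
    ∃ (β : Type) (_ : Fintype β) (A' : SimpleGraph β) (i : A ↪g A'), P β A' ∧
      ∀ (γ : Type) [Fintype γ], ∀ B : SimpleGraph γ, P γ B →
        ∀ (δ : Type) [Fintype δ], ∀ C : SimpleGraph δ, P δ C →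
          ∀ (f : A' ↪g B) (g : A' ↪g C),
            ∃ (ε : Type) (_ : Fintype ε) (D : SimpleGraph ε), P ε D ∧
              ∃ (f' : B ↪g D) (g' : C ↪g D),
                ∀ a : α, f' (f (i a)) = g' (g (i a))

/-!
Having no odd cycle of length at most `m` is the same as having no odd closed walk of length at
most `m`. Call the *profile* of `A` in an extension `G` the set of triples `(a, a', l)` with
`l ≤ m` for which `G` has a walk of length `l` from `a` to `a'`. Profiles only grow under
extension and there are finitely many of them, so some extension `A'` of `A` in the class has a
maximal profile; then `A` has the same profile in all further extensions of `A'`. If `A` has the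
same profile in `B` and in `C`, then in the graph obtained by gluing `B` and `C` along `A`, every
excursion of a short walk into `C` which starts and ends in `A` can be rerouted through `B`
without changing its length. So a short odd closed walk in the glued graph would give one in
`B`, or symmetrically one in `C`.
-/

universe u

variable {V W : Type*} {G : SimpleGraph V} {H : SimpleGraph W} {m : ℕ}

lemma even_length_bypass_iff [DecidableEq V] {u v : V} (p : G.Walk u v)
    (even_cycles : ∀ (w : V) (c : G.Walk w w), c.IsCycle → c.length ≤ p.length → Even c.length) :
    Even p.bypass.length ↔ Even p.length := by
  induction p with
  | nil => rfl
  | @cons u x v hux q ih =>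
    have bypass_iff : Even q.bypass.length ↔ Even q.length :=
      ih fun w c hc hcq ↦ even_cycles w c hc (hcq.trans (by simp))
    by_cases hu : u ∈ q.bypass.support
    · set r := q.bypass.takeUntil u hu
      have split : r.length + (q.bypass.dropUntil u hu).length = q.bypass.length := by
        rw [← Walk.length_append, Walk.take_spec]
      have r_isPath : r.IsPath := q.bypass_isPath.takeUntil hu
      -- `cons hux r` is either a cycle or the edge `hux` traversed back and forth.
      have even_loop : Even (r.length + 1) := by
        by_cases hedge : s(x, u) ∈ r.edges
        · rw [r_isPath.length_eq_one_of_mem_edges hedge]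
          exact even_two
        · refine even_cycles u (.cons hux r) ((Walk.cons_isCycle_iff r hux).2
            ⟨r_isPath, Sym2.eq_swap ▸ hedge⟩) ?_
          have := q.length_bypass_le_length
          simp only [Walk.length_cons]
          omega
      simp only [Walk.bypass, hu, ↓reduceDIte, Walk.length_cons]
      rw [Nat.even_add_one, ← bypass_iff, ← split, Nat.even_add]
      have := Nat.even_add_one.1 even_loop
      tauto
    · simp only [Walk.bypass, hu, ↓reduceDIte, Walk.length_cons, Nat.even_add_one, bypass_iff]

lemma exists_isCycle_odd_length {v : V} (p : G.Walk v v) (hp : Odd p.length) :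
    ∃ (w : V) (c : G.Walk w w), c.IsCycle ∧ Odd c.length ∧ c.length ≤ p.length := by
  classical
  by_contra! h
  have bypass_nil : p.bypass = .nil := (Walk.isPath_iff_nil.1 p.bypass_isPath).eq_nil
  have := even_length_bypass_iff p fun w c hc hcp ↦
    Nat.not_odd_iff_even.1 fun hodd ↦ (h w c hc hodd).not_ge hcp
  rw [bypass_nil, Walk.length_nil, iff_true_left Even.zero] at this
  exact Nat.not_even_iff_odd.2 hp this

/-- The odd girth of `G` is greater than `m`. This is phrased with closed walks instead of cycles
because walks, unlike cycles, can be concatenated and mapped along homomorphisms. -/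
def OddGirthGT (m : ℕ) (G : SimpleGraph V) : Prop :=
  ∀ (v : V) (p : G.Walk v v), Odd p.length → m < p.length

lemma oddGirthGT_iff_forall_isCycle :
    OddGirthGT m G ↔ ∀ (v : V) (c : G.Walk v v), c.IsCycle → Odd c.length → m < c.length := by
  refine ⟨fun h v c _ ↦ h v c, fun h v p hp ↦ ?_⟩
  obtain ⟨w, c, hc, hodd, hle⟩ := exists_isCycle_odd_length p hp
  exact (h w c hc hodd).trans_le hle

lemma oddGirthGT_iff_free_cycleGraph {n : ℕ} :
    OddGirthGT (2 * n + 1) G ↔ ∀ k, 1 ≤ k → k ≤ n → (cycleGraph (2 * k + 1)).Free G := by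
  rw [oddGirthGT_iff_forall_isCycle]
  constructor
  · intro h k hk hkn hcontained
    obtain ⟨v, c, hc, hlen⟩ := (cycleGraph_isContained_iff (by omega)).1 hcontained
    have := h v c hc (hlen ▸ odd_two_mul_add_one k)
    omega
  · rintro h v c hc ⟨k, hk⟩
    have three_le := hc.three_le_length
    by_contra! hle
    exact h k (by omega) (by omega)
      ((cycleGraph_isContained_iff (by omega)).2 ⟨v, c, hc, hk⟩)

lemma not_contains_iff_free {V W : Type} {A : SimpleGraph V} {G : SimpleGraph W} :
    ¬ Contains A G ↔ A.Free G :=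
  not_congr ⟨fun ⟨f, hf⟩ ↦ ⟨f.toCopy hf⟩, fun ⟨f⟩ ↦ ⟨f.toHom, f.injective⟩⟩

section WalkProfile

variable {α : Type*}

/-- The lengths up to `m` of walks in `G` between points of a set of vertices labelled by `α`.
Lengths live in `Fin (m + 1)` so that there are finitely many profiles when `α` is finite. -/
def walkProfile (m : ℕ) (G : SimpleGraph V) (f : α → V) : Set (α × α × Fin (m + 1)) :=
  {t | ∃ p : G.Walk (f t.1) (f t.2.1), p.length = t.2.2}

lemma walkProfile_subset_comp (φ : G →g H) (f : α → V) :
    walkProfile m G f ⊆ walkProfile m H (φ ∘ f) := by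
  rintro t ⟨p, hp⟩
  exact ⟨p.map φ, by rw [Walk.length_map, hp]⟩

lemma exists_walk_length_eq_of_walkProfile_subset {f : α → V} {g : α → W}
    (h : walkProfile m G f ⊆ walkProfile m H g) {a a' : α} (p : G.Walk (f a) (f a'))
    (hp : p.length ≤ m) : ∃ q : H.Walk (g a) (g a'), q.length = p.length :=
  @h (a, a', ⟨p.length, Nat.lt_succ_of_le hp⟩) ⟨p, rfl⟩

theorem exists_extension_walkProfile_eq {α : Type u} [Finite α]
    (P : ∀ V : Type u, SimpleGraph V → Prop) (m : ℕ) (A : SimpleGraph α) (hA : P α A) :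
    ∃ (β : Type u) (_ : Finite β) (A' : SimpleGraph β) (i : A ↪g A'), P β A' ∧
      ∀ (γ : Type u) [Finite γ] (B : SimpleGraph γ), P γ B → ∀ f : A' ↪g B,
        walkProfile m B (f.comp i) = walkProfile m A' i := by
  let profiles : Set (Set (α × α × Fin (m + 1))) :=
    {T | ∃ (β : Type u) (_ : Finite β) (A' : SimpleGraph β) (i : A ↪g A'),
      P β A' ∧ walkProfile m A' i = T}
  have nonempty : profiles.Nonempty := ⟨_, α, ‹_›, A, .refl, hA, rfl⟩
  obtain ⟨_, ⟨β, hβ, A', i, hA', rfl⟩, hmax⟩ := (Set.toFinite profiles).exists_maximal nonempty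
  refine ⟨β, hβ, A', i, hA', fun γ _ B hB f ↦ ?_⟩
  have grows : walkProfile m A' i ⊆ walkProfile m B (f.comp i) :=
    walkProfile_subset_comp f.toHom i
  exact (hmax ⟨γ, ‹_›, B, f.comp i, hB, rfl⟩ grows).antisymm grows

end WalkProfile

section Gluing

variable {α γ δ ε : Type*} {f : α → γ} {g : α → δ} {j : γ ↪ ε} {k : δ ↪ ε}
  {A : SimpleGraph α} {B : SimpleGraph γ} {C : SimpleGraph δ}

/-- The copies `j` of `γ` and `k` of `δ` inside `ε` intersect exactly in `α`, that is, the square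
formed by `f`, `g`, `j` and `k` is commutative and a pullback. Under this hypothesis
`B.map j ⊔ C.map k` is the free amalgam of the graphs `B` and `C` over `α`. -/
def IsGluing (f : α → γ) (g : α → δ) (j : γ ↪ ε) (k : δ ↪ ε) : Prop :=
  ∀ b c, j b = k c ↔ ∃ a, f a = b ∧ g a = c

lemma IsGluing.symm (h : IsGluing f g j k) : IsGluing g f k j := fun c b ↦ by
  simp only [eq_comm (a := k c), h b c, and_comm]

lemma IsGluing.apply_eq (h : IsGluing f g j k) (a : α) : j (f a) = k (g a) :=
  (h _ _).2 ⟨a, rfl, rfl⟩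

open CategoryTheory Limits.Types in
theorem exists_isGluing {α γ δ : Type u} [Finite γ] [Finite δ] (f : α ↪ γ) (g : α ↪ δ) :
    ∃ (ε : Type u) (_ : Finite ε) (j : γ ↪ ε) (k : δ ↪ ε), IsGluing f g j k := by
  have : Mono (↾f) := (mono_iff_injective _).2 f.injective
  have : Mono (↾g) := (mono_iff_injective _).2 g.injective
  exact ⟨Pushout (↾f) (↾g), inferInstanceAs (Finite (Quot _)),
    ⟨Pushout.inl (↾f) (↾g), (mono_iff_injective _).1 inferInstance⟩,
    ⟨Pushout.inr (↾f) (↾g), (mono_iff_injective _).1 inferInstance⟩,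
    Pushout.inl_eq_inr_iff (↾f) (↾g)⟩

lemma IsGluing.map_sup_map_adj_left {f : A ↪g B} {g : A ↪g C} (h : IsGluing f g j k) {b b' : γ} :
    (B.map j ⊔ C.map k).Adj (j b) (j b') ↔ B.Adj b b' := by
  rw [sup_adj, map_adj_apply, map_adj, or_iff_left_iff_imp]
  rintro ⟨c, c', hadj, hc, hc'⟩
  obtain ⟨a, rfl, rfl⟩ := (h _ _).1 hc.symm
  obtain ⟨a', rfl, rfl⟩ := (h _ _).1 hc'.symm
  exact f.map_adj_iff.2 (g.map_adj_iff.1 hadj)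

lemma IsGluing.map_sup_map_adj_right {f : A ↪g B} {g : A ↪g C} (h : IsGluing f g j k) {c c' : δ} :
    (B.map j ⊔ C.map k).Adj (k c) (k c') ↔ C.Adj c c' := by
  rw [sup_comm, h.symm.map_sup_map_adj_left]

/-- The second alternative tracks a walk which is currently inside `C`: its first part `q` stays in
`C` and the rest has already been rerouted through `B`. -/
lemma IsGluing.exists_rerouted_walk (h : IsGluing f g j k)
    (hprofile : walkProfile m C g ⊆ walkProfile m B f) {b : γ} {x y : ε}
    (p : (B.map j ⊔ C.map k).Walk x y) (hp : p.length ≤ m) (hy : y = j b) :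
    (∀ b', x = j b' → ∃ q : B.Walk b' b, q.length = p.length) ∧
    (∀ c, x = k c → ∃ (a : α) (q : C.Walk c (g a)) (r : B.Walk (f a) b),
      q.length + r.length = p.length) := by
  induction p with
  | nil =>
    subst hy
    refine ⟨fun b' hb' ↦ ?_, fun c hc ↦ ?_⟩
    · obtain rfl := j.injective hb'
      exact ⟨.nil, rfl⟩
    · obtain ⟨a, rfl, rfl⟩ := (h _ _).1 hc
      exact ⟨a, .nil, .nil, rfl⟩
  | cons hadj p ih =>
    rw [Walk.length_cons] at hp ⊢
    obtain ⟨ihB, ihC⟩ := ih (by omega) hy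
    rw [sup_adj, map_adj, map_adj] at hadj
    rcases hadj with ⟨b₁, b₂, hadj, rfl, rfl⟩ | ⟨c₁, c₂, hadj, rfl, rfl⟩
    · obtain ⟨q, hq⟩ := ihB b₂ rfl
      refine ⟨fun b' hb' ↦ ?_, fun c hc ↦ ?_⟩
      · obtain rfl := j.injective hb'
        exact ⟨.cons hadj q, by rw [Walk.length_cons, hq]⟩
      · obtain ⟨a, rfl, rfl⟩ := (h _ _).1 hc
        exact ⟨a, .nil, .cons hadj q, by simp [hq]⟩
    · obtain ⟨a, q, r, hqr⟩ := ihC c₂ rfl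
      refine ⟨fun b' hb' ↦ ?_, fun c hc ↦ ?_⟩
      · obtain ⟨a', rfl, rfl⟩ := (h _ _).1 hb'.symm
        obtain ⟨q', hq'⟩ := exists_walk_length_eq_of_walkProfile_subset hprofile (.cons hadj q)
          (by rw [Walk.length_cons]; omega)
        exact ⟨q'.append r, by rw [Walk.length_append, hq', Walk.length_cons]; omega⟩
      · obtain rfl := k.injective hc
        exact ⟨a, .cons hadj q, r, by rw [Walk.length_cons]; omega⟩

lemma IsGluing.exists_walk_left (h : IsGluing f g j k)
    (hprofile : walkProfile m C g ⊆ walkProfile m B f) {b b' : γ}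
    (p : (B.map j ⊔ C.map k).Walk (j b) (j b')) (hp : p.length ≤ m) :
    ∃ q : B.Walk b b', q.length = p.length :=
  (h.exists_rerouted_walk hprofile p hp rfl).1 b rfl

lemma IsGluing.exists_walk_right (h : IsGluing f g j k)
    (hprofile : walkProfile m B f ⊆ walkProfile m C g) {c c' : δ}
    (p : (B.map j ⊔ C.map k).Walk (k c) (k c')) (hp : p.length ≤ m) :
    ∃ q : C.Walk c c', q.length = p.length := by
  revert p
  rw [sup_comm]
  exact fun p hp ↦ h.symm.exists_walk_left hprofile p hp

lemma IsGluing.oddGirthGT (h : IsGluing f g j k) (hB : OddGirthGT m B) (hC : OddGirthGT m C)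
    (hprofile : walkProfile m B f = walkProfile m C g) :
    OddGirthGT m (B.map j ⊔ C.map k) := by
  intro x p hodd
  by_contra! hle
  have not_nil : ¬ p.Nil := Walk.not_nil_iff_lt_length.2 hodd.pos
  have hadj := p.adj_snd not_nil
  rw [sup_adj, map_adj, map_adj] at hadj
  rcases hadj with ⟨b, -, -, rfl, -⟩ | ⟨c, -, -, rfl, -⟩
  · obtain ⟨q, hq⟩ := h.exists_walk_left hprofile.ge p hle
    exact (hB b q (hq ▸ hodd)).not_ge (hq ▸ hle)
  · obtain ⟨q, hq⟩ := h.exists_walk_right hprofile.le p hle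
    exact (hC c q (hq ▸ hodd)).not_ge (hq ▸ hle)

theorem exists_amalgam_oddGirthGT {α γ δ : Type u} [Finite γ] [Finite δ]
    {A : SimpleGraph α} {B : SimpleGraph γ} {C : SimpleGraph δ}
    (hB : OddGirthGT m B) (hC : OddGirthGT m C) (f : A ↪g B) (g : A ↪g C)
    (hprofile : walkProfile m B f = walkProfile m C g) :
    ∃ (ε : Type u) (_ : Finite ε) (D : SimpleGraph ε), OddGirthGT m D ∧
      ∃ (f' : B ↪g D) (g' : C ↪g D), ∀ a, f' (f a) = g' (g a) := by
  obtain ⟨ε, hε, j, k, h⟩ := exists_isGluing f.toEmbedding g.toEmbedding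
  exact ⟨ε, hε, B.map j ⊔ C.map k, h.oddGirthGT hB hC hprofile,
    ⟨j, IsGluing.map_sup_map_adj_left h⟩, ⟨k, IsGluing.map_sup_map_adj_right h⟩, h.apply_eq⟩

end Gluing

theorem graphWAP_oddGirthGT (m : ℕ) : GraphWAP (fun _ G ↦ OddGirthGT m G) := by
  intro α _ A hA
  obtain ⟨β, _, A', i, hA', hprofile⟩ :=
    exists_extension_walkProfile_eq (fun _ G ↦ OddGirthGT m G) m A hA
  refine ⟨β, .ofFinite β, A', i, hA', fun γ _ B hB δ _ C hC f g ↦ ?_⟩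
  obtain ⟨ε, _, D, hD, f', g', hcomm⟩ := exists_amalgam_oddGirthGT hB hC (f.comp i) (g.comp i)
    ((hprofile γ B hB f).trans (hprofile δ C hC g).symm)
  exact ⟨ε, .ofFinite ε, D, hD, f', g', hcomm⟩

/-- For `n ≥ 1`, the class of all finite graphs containing no odd cycle of length at most
`2n + 1` has the weak amalgamation property. -/
theorem shortOddCycleFree_wap (n : ℕ) (hn : 1 ≤ n) :
    GraphWAP (fun _ G => ∀ k : ℕ, 1 ≤ k → k ≤ n →
      ¬ Contains (SimpleGraph.cycleGraph (2 * k + 1)) G) := by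
  simp_rw [not_contains_iff_free, ← oddGirthGT_iff_free_cycleGraph]
  exact graphWAP_oddGirthGT (2 * n + 1)
end

section
/- Fix n ≥ 1 and let P_n denote the path with n edges (on n+1 vertices). The class K({P_n}) of all finite graphs admitting no injective graph homomorphism from P_n has the weak amalgamation property. -/
open SimpleGraph

/-!
The extensions of a finite graph `A` inside the class, preordered by embeddability over `A`, form a
well quasi-order, and any well quasi-order has an element above which it is directed; such an
extension of `A` is the `A'` required by the weak amalgamation property.

The well quasi-order is Ding's theorem. A component without long paths can be rooted anywhere, and
the paths from the root get shorter when the root is deleted and the remaining components are rooted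
at its neighbours, so a graph without long paths has bounded treedepth. By induction on the depth,
graphs of bounded treedepth with well-quasi-ordered vertex labels are well-quasi-ordered: Higman's
lemma reduces them to their components, and deleting the root of a component lowers the depth once
adjacency to the root is stored in the labels.
-/

universe u v

section WellQuasiOrder

-- If every `x` had elements `b x`, `c x` above it without a common upper bound, then along the
-- iterates `x₀, x₁, …` of `c` the sequence `b x₀, b x₁, …` would be bad: for `m < k`, `b xₖ` lies
-- above `xₖ`, hence above `c xₘ`, and so cannot lie above `b xₘ`.
lemma exists_directedOn_Ici (α : Type*) [Preorder α] [WellQuasiOrderedLE α] [Nonempty α] :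
    ∃ x : α, DirectedOn (· ≤ ·) (Set.Ici x) := by
  by_contra! h
  have no_upper_bound (x : α) : ∃ b c, x ≤ b ∧ x ≤ c ∧ ∀ d, b ≤ d → ¬c ≤ d := by
    by_contra! hx
    refine h x fun b hb c hc ↦ ?_
    obtain ⟨d, hbd, hcd⟩ := hx b c hb hc
    exact ⟨d, hb.trans hbd, hbd, hcd⟩
  choose b c hb hc hbc using no_upper_bound
  let x (k : ℕ) : α := c^[k] (Classical.arbitrary α)
  have x_succ (k : ℕ) : x (k + 1) = c (x k) := Function.iterate_succ_apply' c k _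
  have x_mono : Monotone x := monotone_nat_of_le_succ fun k ↦ x_succ k ▸ hc (x k)
  obtain ⟨m, k, hmk, hle⟩ := wellQuasiOrdered_le fun k ↦ b (x k)
  refine hbc (x m) (b (x k)) hle ?_
  calc c (x m) = x (m + 1) := (x_succ m).symm
    _ ≤ x k := x_mono hmk
    _ ≤ b (x k) := hb (x k)

variable {α : Type*} {r : α → α → Prop}

lemma exists_orderEmbedding_of_sublistForall₂_ofFn {β : Type*} {R : α → β → Prop} {m n : ℕ}
    {f : Fin m → α} {g : Fin n → β} (h : List.SublistForall₂ R (List.ofFn f) (List.ofFn g)) :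
    ∃ φ : Fin m ↪o Fin n, ∀ i, R (f i) (g (φ i)) := by
  obtain ⟨l, hfl, hlg⟩ := List.sublistForall₂_iff.1 h
  obtain ⟨φ, hφ⟩ := List.sublist_iff_exists_fin_orderEmbedding_get_eq.1 hlg
  obtain ⟨hlength, hR⟩ := List.forall₂_iff_get.1 hfl
  rw [List.length_ofFn] at hlength
  refine ⟨(Fin.castOrderIso hlength).toOrderEmbedding.trans
    (φ.trans (Fin.castOrderIso List.length_ofFn).toOrderEmbedding), fun i ↦ ?_⟩
  have hi := hR i (by simp) (hlength ▸ i.2)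
  have hφi := hφ (Fin.cast hlength i)
  simp only [List.get_ofFn] at hi hφi
  exact hφi ▸ hi

lemma exists_lt_embedding_of_partiallyWellOrderedOn [IsPreorder α r] {s : Set α}
    (hs : s.PartiallyWellOrderedOn r) {ι : ℕ → Type*} [∀ k, Finite (ι k)] (x : ∀ k, ι k → α)
    (hx : ∀ k i, x k i ∈ s) :
    ∃ m k, m < k ∧ ∃ φ : ι m ↪ ι k, ∀ i, r (x m i) (x k (φ i)) := by
  let e (k : ℕ) : ι k ≃ Fin (Nat.card (ι k)) := Finite.equivFin (ι k)
  obtain ⟨m, k, hmk, h⟩ := (hs.partiallyWellOrderedOn_sublistForall₂ r).exists_lt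
    (f := fun k ↦ List.ofFn (x k ∘ (e k).symm)) fun k ↦ by simpa using fun i ↦ hx k _
  obtain ⟨φ, hφ⟩ := exists_orderEmbedding_of_sublistForall₂_ofFn h
  refine ⟨m, k, hmk, (e m).toEmbedding.trans (φ.toEmbedding.trans (e k).symm.toEmbedding), ?_⟩
  intro i
  simpa using hφ (e m i)

end WellQuasiOrder

section Graph

variable {V W : Type*} {G : SimpleGraph V} {H : SimpleGraph W}

lemma exists_embedding_of_induce_compl_singleton {r : V} {s : W}
    (f : G.induce {r}ᶜ ↪g H.induce {s}ᶜ) (hf : ∀ v : ({r}ᶜ : Set V), G.Adj r v ↔ H.Adj s (f v)) :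
    ∃ F : G ↪g H, F r = s ∧ ∀ v, F v.1 = (f v).1 := by
  classical
  let F (v : V) : W := if hv : v = r then s else f ⟨v, hv⟩
  have F_root : F r = s := by simp [F]
  have F_ne (v : ({r}ᶜ : Set V)) : F v.1 = f v := dif_neg v.2
  have root_or_ne (v : V) : v = r ∨ ∃ w : ({r}ᶜ : Set V), w.1 = v := by
    by_cases hv : v = r
    exacts [.inl hv, .inr ⟨⟨v, hv⟩, rfl⟩]
  have F_injective : F.Injective := by
    intro v w hvw
    obtain rfl | ⟨v, rfl⟩ := root_or_ne v <;> obtain rfl | ⟨w, rfl⟩ := root_or_ne w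
    · rfl
    · exact absurd (F_ne w ▸ hvw ▸ F_root) (f w).2
    · exact absurd (F_ne v ▸ hvw ▸ F_root) (f v).2
    · rw [F_ne, F_ne] at hvw
      rw [f.injective (Subtype.ext hvw)]
  refine ⟨⟨⟨F, F_injective⟩, fun {v w} ↦ ?_⟩, F_root, F_ne⟩
  change H.Adj (F v) (F w) ↔ G.Adj v w
  obtain rfl | ⟨v, rfl⟩ := root_or_ne v <;> obtain rfl | ⟨w, rfl⟩ := root_or_ne w
  · simp
  · rw [F_root, F_ne, hf]
  · rw [F_root, F_ne, H.adj_comm, G.adj_comm, hf]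
  · rw [F_ne, F_ne]
    exact f.map_adj_iff

lemma exists_embedding_of_connectedComponents
    (φ : G.ConnectedComponent ↪ H.ConnectedComponent)
    (e : ∀ c : G.ConnectedComponent, c.toSimpleGraph ↪g (φ c).toSimpleGraph) :
    ∃ F : G ↪g H, ∀ (c : G.ConnectedComponent) (v : c), F v = e c v := by
  let F (v : V) : W := e (G.connectedComponentMk v) ⟨v, rfl⟩
  have F_eq (c : G.ConnectedComponent) (v : c) : F v.1 = e c v := by
    obtain ⟨v, rfl⟩ := v
    rfl
  have mk_F (v : V) : H.connectedComponentMk (F v) = φ (G.connectedComponentMk v) :=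
    (e (G.connectedComponentMk v) ⟨v, rfl⟩).2
  have mk_eq_of_mk_F_eq {v w : V}
      (h : H.connectedComponentMk (F v) = H.connectedComponentMk (F w)) :
      G.connectedComponentMk v = G.connectedComponentMk w :=
    φ.injective (by rwa [mk_F, mk_F] at h)
  have F_injective : F.Injective := by
    intro v w hvw
    have hc := mk_eq_of_mk_F_eq (congrArg _ hvw)
    rw [F_eq _ ⟨v, hc⟩, F_eq _ ⟨w, rfl⟩] at hvw
    exact congrArg Subtype.val ((e _).injective (Subtype.ext hvw))
  refine ⟨⟨⟨F, F_injective⟩, fun {v w} ↦ ?_⟩, F_eq⟩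
  change H.Adj (F v) (F w) ↔ G.Adj v w
  by_cases hc : G.connectedComponentMk v = G.connectedComponentMk w
  · rw [F_eq _ ⟨v, hc⟩, F_eq _ ⟨w, rfl⟩]
    exact (e _).map_adj_iff
  · exact iff_of_false
      (fun h ↦ hc (mk_eq_of_mk_F_eq (ConnectedComponent.connectedComponentMk_eq_of_adj h)))
      (fun h ↦ hc (ConnectedComponent.connectedComponentMk_eq_of_adj h))

lemma exists_adj_mem_connectedComponent_induce_compl_singleton (hG : G.Preconnected) (r : V)
    (c : (G.induce {r}ᶜ).ConnectedComponent) : ∃ w : ({r}ᶜ : Set V), w ∈ c.supp ∧ G.Adj r w := by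
  obtain ⟨u, hu⟩ := c.nonempty_supp
  obtain ⟨p⟩ := hG u r
  obtain ⟨⟨⟨x, y⟩, hxy⟩, -, ⟨w, hw, rfl⟩, hy⟩ :=
    p.exists_boundary_dart (Subtype.val '' c.supp) ⟨u, hu, rfl⟩ fun ⟨v, _, hv⟩ ↦ v.2 hv
  suffices y = r from ⟨w, hw, this ▸ hxy.symm⟩
  by_contra hyr
  exact hy ⟨⟨y, hyr⟩, c.mem_supp_of_adj_mem_supp hw hxy, rfl⟩

lemma length_lt_of_isPath_of_adj_root {r : V} {d : ℕ}
    (hr : ∀ v (p : G.Walk r v), p.IsPath → p.length < d + 1) {f : H →g G}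
    (hf : Function.Injective f) (hrf : r ∉ Set.range f) {w v : W} (hw : G.Adj r (f w))
    {p : H.Walk w v} (hp : p.IsPath) : p.length < d := by
  have root_notMem : r ∉ (p.map f).support := by
    rw [Walk.support_map, List.mem_map]
    exact fun ⟨x, _, hx⟩ ↦ hrf ⟨x, hx⟩
  have cons_isPath : (Walk.cons hw (p.map f)).IsPath := (hp.map hf).cons root_notMem
  simpa using hr _ _ cons_isPath

/-- `HasTreedepthLE d G` says that the treedepth of `G` is at most `d`, in the recursive form: each
component of `G` has a vertex whose deletion leaves a graph of treedepth at most `d - 1`. Only the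
graph without vertices has treedepth `0`. -/
def HasTreedepthLE : ℕ → ∀ {V : Type u}, SimpleGraph V → Prop
  | 0, V, _ => IsEmpty V
  | d + 1, _, G =>
    ∀ c : G.ConnectedComponent, ∃ r : c, HasTreedepthLE d (c.toSimpleGraph.induce {r}ᶜ)

-- The components left after deleting `r` are rooted at neighbours of `r`: prepending `r` to a path
-- from such a neighbour makes it longer by one edge.
lemma hasTreedepthLE_of_rooted_components (d : ℕ) : ∀ {V : Type u} {G : SimpleGraph V},
    (∀ c : G.ConnectedComponent, ∃ r : c, ∀ v (p : c.toSimpleGraph.Walk r v),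
      p.IsPath → p.length < d) → HasTreedepthLE d G := by
  induction d with
  | zero =>
    intro V G h
    refine ⟨fun v ↦ ?_⟩
    obtain ⟨r, hr⟩ := h (G.connectedComponentMk v)
    exact Nat.not_lt_zero _ (hr r .nil .nil)
  | succ d ih =>
    intro V G h c
    obtain ⟨r, hr⟩ := h c
    refine ⟨r, ih fun c' ↦ ?_⟩
    obtain ⟨w, hw, hrw⟩ := exists_adj_mem_connectedComponent_induce_compl_singleton
      c.connected_toSimpleGraph.preconnected r c'
    let f : c'.toSimpleGraph ↪g c.toSimpleGraph :=
      (Embedding.induce {r}ᶜ).comp (Embedding.induce c'.supp)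
    have root_notMem : r ∉ Set.range f.toHom := fun ⟨x, hx⟩ ↦ x.1.2 hx
    exact ⟨⟨w, hw⟩, fun v p hp ↦
      length_lt_of_isPath_of_adj_root (w := ⟨w, hw⟩) hr f.injective root_notMem hrw hp⟩

lemma hasTreedepthLE_of_isPath_length_lt {V : Type u} {G : SimpleGraph V} {n : ℕ}
    (h : ∀ u v (p : G.Walk u v), p.IsPath → p.length < n) : HasTreedepthLE n G := by
  refine hasTreedepthLE_of_rooted_components n fun c ↦ ?_
  obtain ⟨r, hr⟩ := c.nonempty_supp
  refine ⟨⟨r, hr⟩, fun v p hp ↦ ?_⟩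
  simpa using h _ _ (p.map c.toSimpleGraph_hom) (hp.map Subtype.val_injective)

lemma length_lt_of_isPath_of_not_contains_pathGraph {V : Type} {G : SimpleGraph V} {n : ℕ}
    (h : ¬Contains (pathGraph (n + 1)) G) {u v : V} {p : G.Walk u v} (hp : p.IsPath) :
    p.length < n := by
  by_contra! hn
  have contained := (hp.take n).isContained_pathGraph
  rw [Walk.take_length, min_eq_left hn] at contained
  obtain ⟨f⟩ := contained
  exact h ⟨f.toHom, f.injective⟩

end Graph

/-- A finite graph with vertices labelled by `L`; the vertex type is bundled so that sequences of
such graphs can be compared. -/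
structure FiniteLabeledGraph (L : Type v) where
  V : Type u
  [finite : Finite V]
  graph : SimpleGraph V
  label : V → L

namespace FiniteLabeledGraph

attribute [instance] finite

variable {L : Type v} {r : L → L → Prop}

/-- Embeddability of labelled graphs as induced subgraphs, where labels may increase along `r`. -/
def Embeds (r : L → L → Prop) (X Y : FiniteLabeledGraph.{u} L) : Prop :=
  ∃ f : X.graph ↪g Y.graph, ∀ v, r (X.label v) (Y.label (f v))

instance [IsPreorder L r] : IsPreorder (FiniteLabeledGraph.{u} L) (Embeds r) where
  refl _ := ⟨.refl, fun _ ↦ refl_of r _⟩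
  trans _ _ _ := fun ⟨f, hf⟩ ⟨g, hg⟩ ↦ ⟨g.comp f, fun v ↦ trans_of r (hf v) (hg (f v))⟩

/-- A connected component, with its labels. -/
def component (X : FiniteLabeledGraph.{u} L) (c : X.graph.ConnectedComponent) :
    FiniteLabeledGraph.{u} L where
  V := c
  graph := c.toSimpleGraph
  label v := X.label v

/-- The labelled graph left by deleting the vertex `x`, where each label now also records adjacency
to `x`. -/
def deleteVertex (X : FiniteLabeledGraph.{u} L) (x : X.V) :
    FiniteLabeledGraph.{u} (L × Prop) where
  V := ({x}ᶜ : Set X.V)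
  graph := X.graph.induce {x}ᶜ
  label v := (X.label v, X.graph.Adj x v)

/-- The comparison of labels for graphs with a deleted vertex: labels increase along `r`, while
adjacency to the deleted vertex is preserved in both directions, as for induced subgraphs. -/
def LabelAdjRel (r : L → L → Prop) (p q : L × Prop) : Prop :=
  r p.1 q.1 ∧ (p.2 ↔ q.2)

instance [IsPreorder L r] : IsPreorder (L × Prop) (LabelAdjRel r) where
  refl _ := ⟨refl_of r _, .rfl⟩
  trans _ _ _ h h' := ⟨trans_of r h.1 h'.1, h.2.trans h'.2⟩

lemma wellQuasiOrdered_labelAdjRel [IsPreorder L r] (hr : WellQuasiOrdered r) :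
    WellQuasiOrdered (LabelAdjRel r) :=
  hr.prod (Finite.wellQuasiOrdered Iff)

lemma Embeds.of_deleteVertex {X Y : FiniteLabeledGraph.{u} L} {x : X.V} {y : Y.V}
    (hxy : r (X.label x) (Y.label y))
    (h : Embeds (LabelAdjRel r) (X.deleteVertex x) (Y.deleteVertex y)) : Embeds r X Y := by
  obtain ⟨f, hf⟩ := h
  obtain ⟨F, hFx, hF⟩ := exists_embedding_of_induce_compl_singleton f fun v ↦ (hf v).2
  refine ⟨F, fun v ↦ ?_⟩
  obtain rfl | hv := eq_or_ne v x
  · rwa [hFx]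
  · rw [hF ⟨v, hv⟩]
    exact (hf ⟨v, hv⟩).1

lemma Embeds.of_components {X Y : FiniteLabeledGraph.{u} L}
    (φ : X.graph.ConnectedComponent ↪ Y.graph.ConnectedComponent)
    (h : ∀ c, Embeds r (X.component c) (Y.component (φ c))) : Embeds r X Y := by
  choose e he using h
  obtain ⟨F, hF⟩ := exists_embedding_of_connectedComponents φ e
  refine ⟨F, fun v ↦ ?_⟩
  rw [hF (X.graph.connectedComponentMk v) ⟨v, rfl⟩]
  exact he (X.graph.connectedComponentMk v) ⟨v, rfl⟩

lemma partiallyWellOrderedOn_of_deleteVertex [IsPreorder L r] (hr : WellQuasiOrdered r)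
    {S : Set (FiniteLabeledGraph.{u} (L × Prop))}
    (hS : S.PartiallyWellOrderedOn (Embeds (LabelAdjRel r))) :
    {X : FiniteLabeledGraph.{u} L | ∃ x, X.deleteVertex x ∈ S}.PartiallyWellOrderedOn
      (Embeds r) := by
  rw [Set.partiallyWellOrderedOn_iff_exists_lt]
  intro X hX
  choose x hx using hX
  obtain ⟨m, k, hmk, hlabel, hdelete⟩ :=
    ((Set.partiallyWellOrderedOn_univ_iff.2 hr).prod hS).exists_lt
      (f := fun k ↦ ((X k).label (x k), (X k).deleteVertex (x k))) fun k ↦ ⟨trivial, hx k⟩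
  exact ⟨m, k, hmk, .of_deleteVertex hlabel hdelete⟩

lemma partiallyWellOrderedOn_of_components [IsPreorder L r] {S : Set (FiniteLabeledGraph.{u} L)}
    (hS : S.PartiallyWellOrderedOn (Embeds r)) :
    {X : FiniteLabeledGraph.{u} L | ∀ c, X.component c ∈ S}.PartiallyWellOrderedOn
      (Embeds r) := by
  rw [Set.partiallyWellOrderedOn_iff_exists_lt]
  intro X hX
  have (k : ℕ) : Finite (X k).graph.ConnectedComponent := Quot.finite _
  obtain ⟨m, k, hmk, φ, hφ⟩ := exists_lt_embedding_of_partiallyWellOrderedOn hS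
    (fun k ↦ (X k).component) hX
  exact ⟨m, k, hmk, .of_components φ hφ⟩

theorem partiallyWellOrderedOn_hasTreedepthLE (d : ℕ) :
    ∀ {L : Type v} {r : L → L → Prop} [IsPreorder L r], WellQuasiOrdered r →
      {X : FiniteLabeledGraph.{u} L | HasTreedepthLE d X.graph}.PartiallyWellOrderedOn
        (Embeds r) := by
  induction d with
  | zero =>
    intro L r _ _
    rw [Set.partiallyWellOrderedOn_iff_exists_lt]
    intro X hX
    have : IsEmpty (X 0).V := hX 0
    exact ⟨0, 1, Nat.zero_lt_one, ⟨⟨.ofIsEmpty, fun {v} ↦ isEmptyElim v⟩, isEmptyElim⟩⟩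
  | succ d ih =>
    intro L r _ hr
    exact partiallyWellOrderedOn_of_components
      (partiallyWellOrderedOn_of_deleteVertex hr (ih (wellQuasiOrdered_labelAdjRel hr)))

end FiniteLabeledGraph

/-- A finite graph satisfying `P` with an embedding of `A`. These are preordered by embeddability
over `A`. -/
structure GraphExtension (P : ∀ α : Type, SimpleGraph α → Prop) {α : Type}
    (A : SimpleGraph α) where
  V : Type
  [fintype : Fintype V]
  graph : SimpleGraph V
  prop : P V graph
  embedding : A ↪g graph

namespace GraphExtension

attribute [instance] fintype

variable {P : ∀ α : Type, SimpleGraph α → Prop} {α : Type} {A : SimpleGraph α}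

instance : Preorder (GraphExtension P A) where
  le E F := ∃ f : E.graph ↪g F.graph, ∀ a, f (E.embedding a) = F.embedding a
  le_refl _ := ⟨.refl, fun _ ↦ rfl⟩
  le_trans _ _ _ := fun ⟨f, hf⟩ ⟨g, hg⟩ ↦
    ⟨g.comp f, fun a ↦ (congrArg g (hf a)).trans (hg a)⟩

/-- The extension as a labelled graph: the label of a vertex is its preimage in `A`, so that
label-preserving embeddings are embeddings over `A`. -/
def toLabeledGraph (E : GraphExtension P A) : FiniteLabeledGraph (Set α) where
  V := E.V
  graph := E.graph
  label v := {a | E.embedding a = v}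

lemma le_of_embeds {E F : GraphExtension P A}
    (h : FiniteLabeledGraph.Embeds Eq E.toLabeledGraph F.toLabeledGraph) : E ≤ F := by
  obtain ⟨f, hf⟩ := h
  refine ⟨f, fun a ↦ ?_⟩
  have labels_eq : {b | E.embedding b = E.embedding a} =
      {b | F.embedding b = f (E.embedding a)} := hf (E.embedding a)
  exact (labels_eq.subset rfl).symm

lemma wellQuasiOrderedLE_of_hasTreedepthLE [Finite α] {d : ℕ}
    (hP : ∀ (β : Type) [Finite β] (G : SimpleGraph β), P β G → HasTreedepthLE d G) :
    WellQuasiOrderedLE (GraphExtension P A) where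
  wqo E := by
    obtain ⟨m, k, hmk, h⟩ := (FiniteLabeledGraph.partiallyWellOrderedOn_hasTreedepthLE d
      (Finite.wellQuasiOrdered Eq)).exists_lt (f := fun k ↦ (E k).toLabeledGraph)
      fun k ↦ hP _ _ (E k).prop
    exact ⟨m, k, hmk, le_of_embeds h⟩

end GraphExtension

theorem graphWAP_of_wellQuasiOrderedLE {P : ∀ α : Type, SimpleGraph α → Prop}
    (hP : ∀ (α : Type) [Finite α] (A : SimpleGraph α), P α A →
      WellQuasiOrderedLE (GraphExtension P A)) :
    GraphWAP P := by
  intro α _ A hA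
  have := hP α A hA
  have : Nonempty (GraphExtension P A) := ⟨⟨α, A, hA, .refl⟩⟩
  obtain ⟨E, hE⟩ := exists_directedOn_Ici (GraphExtension P A)
  refine ⟨E.V, E.fintype, E.graph, E.embedding, E.prop, fun γ _ B hB δ _ C hC f g ↦ ?_⟩
  obtain ⟨D, -, ⟨f', hf'⟩, ⟨g', hg'⟩⟩ :=
    hE ⟨γ, B, hB, f.comp E.embedding⟩ ⟨f, fun _ ↦ rfl⟩
      ⟨δ, C, hC, g.comp E.embedding⟩ ⟨g, fun _ ↦ rfl⟩
  exact ⟨D.V, D.fintype, D.graph, D.prop, f', g', fun a ↦ (hf' a).trans (hg' a).symm⟩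

theorem pathFree_wap_general (n : ℕ) (P : ∀ α : Type, SimpleGraph α → Prop)
    (hP : ∀ (α : Type) [Finite α] (G : SimpleGraph α), P α G →
      ¬Contains (pathGraph (n + 1)) G) :
    GraphWAP P :=
  graphWAP_of_wellQuasiOrderedLE fun _ _ _ _ ↦
    GraphExtension.wellQuasiOrderedLE_of_hasTreedepthLE fun β _ G hG ↦
      hasTreedepthLE_of_isPath_length_lt fun _ _ _ ↦
        length_lt_of_isPath_of_not_contains_pathGraph (hP β G hG)

/-- For `n ≥ 1`, the class of all finite graphs not containing the path with `n` edges
(i.e. the path graph on `n + 1` vertices) has the weak amalgamation property. -/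
theorem pathFree_wap (n : ℕ) (hn : 1 ≤ n) :
    GraphWAP (fun _ G => ¬ Contains (SimpleGraph.pathGraph (n + 1)) G) :=
  pathFree_wap_general n _ fun _ _ _ h ↦ h
end

section
/- Let F be a finite collection of finite connected simple graphs that is homomorphism-closed, meaning: for every surjective graph homomorphism f : B → A with B ∈ F, there exists C ∈ F admitting an injective graph homomorphism into A. Then the class K(F) of all finite F-free graphs has the weak amalgamation property. -/
open SimpleGraph

/-!
The image of a homomorphism from a member of `F` contains a member of `F`. So a graph is `F`-free
iff no member of `F` has a homomorphism to it, and it suffices to amalgamate classes defined by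
finitely many forbidden homomorphisms.

Record, for a graph `G` extending `A`, which induced pieces of members of `F` map to `G` with
prescribed vertices sent to prescribed points of `A`. There are finitely many such records and
they can only grow when `G` is extended, so some extension `A'` of `A` in the class has a maximal
one. If `B` and `C` extend `A'` and `H` in `F` maps to the free amalgam of `B` and `C` over `A`,
then the piece of `H` sent to `C` is recorded in `C`, hence already in `A'`, and so can be rerouted
into `B`; this gives a homomorphism from `H` to `B`, a contradiction.
-/

universe u

section FreeAmalgam

variable {α γ δ : Type*}

/-- The right leg of the pushout of the injections `p` and `q`. The pushout is encoded as `γ`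
together with the points of `δ` outside the range of `q`, so that its left leg is `Sum.inl`. -/
noncomputable def pushoutInr (p : α ↪ γ) (q : α ↪ δ) : δ ↪ γ ⊕ ↥(Set.range q)ᶜ :=
  open scoped Classical in
  (Equiv.Set.sumCompl (Set.range q)).symm.toEmbedding.trans
    (((Equiv.ofInjective q q.injective).symm.toEmbedding.trans p).sumMap (.refl _))

lemma pushoutInr_apply_apply (p : α ↪ γ) (q : α ↪ δ) (a : α) :
    pushoutInr p q (q a) = Sum.inl (p a) := by
  classical
  simp [pushoutInr, Equiv.Set.sumCompl_symm_apply_of_mem (Set.mem_range_self a)]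

lemma pushoutInr_apply_of_notMem_range (p : α ↪ γ) (q : α ↪ δ) {d : δ} (hd : d ∉ Set.range q) :
    pushoutInr p q d = Sum.inr ⟨d, hd⟩ := by
  classical
  simp [pushoutInr, Equiv.Set.sumCompl_symm_apply_of_notMem hd]

lemma pushoutInr_eq_inl_iff (p : α ↪ γ) (q : α ↪ δ) {d : δ} {c : γ} :
    pushoutInr p q d = Sum.inl c ↔ ∃ a, q a = d ∧ p a = c := by
  constructor
  · intro h
    by_cases hd : d ∈ Set.range q
    · obtain ⟨a, rfl⟩ := hd
      rw [pushoutInr_apply_apply] at h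
      exact ⟨a, rfl, Sum.inl_injective h⟩
    · simp [pushoutInr_apply_of_notMem_range p q hd] at h
  · rintro ⟨a, rfl, rfl⟩
    exact pushoutInr_apply_apply p q a

variable {A : SimpleGraph α} {B : SimpleGraph γ} {C : SimpleGraph δ}

/-- The free amalgam of `B` and `C` over `A`: the two graphs are glued along `A`, with no edges
other than those of `B` and of `C`. The vertex set is encoded as in `pushoutInr`. -/
noncomputable def freeAmalgam (p : A ↪g B) (q : A ↪g C) : SimpleGraph (γ ⊕ ↥(Set.range q)ᶜ) :=
  B.map (Function.Embedding.inl : γ ↪ _) ⊔ C.map (pushoutInr p.toEmbedding q.toEmbedding)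

namespace freeAmalgam

/-- The canonical embedding of the left factor in the free amalgam. -/
noncomputable def inl (p : A ↪g B) (q : A ↪g C) : B ↪g freeAmalgam p q where
  toEmbedding := .inl
  map_rel_iff' {_ _} := by
    rw [freeAmalgam, sup_adj, map_adj_apply, or_iff_left_of_imp]
    rw [map_adj]
    rintro ⟨c, d, hcd, hc, hd⟩
    obtain ⟨a, rfl, rfl⟩ := (pushoutInr_eq_inl_iff _ _).1 hc
    obtain ⟨b, rfl, rfl⟩ := (pushoutInr_eq_inl_iff _ _).1 hd
    exact p.map_adj_iff.2 (q.map_adj_iff.1 hcd)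

/-- The canonical embedding of the right factor in the free amalgam. -/
noncomputable def inr (p : A ↪g B) (q : A ↪g C) : C ↪g freeAmalgam p q where
  toEmbedding := pushoutInr p.toEmbedding q.toEmbedding
  map_rel_iff' {_ _} := by
    rw [freeAmalgam, sup_adj, map_adj_apply, or_iff_right_of_imp]
    rw [map_adj]
    rintro ⟨x, y, hxy, hx, hy⟩
    obtain ⟨a, rfl, rfl⟩ := (pushoutInr_eq_inl_iff _ _).1 hx.symm
    obtain ⟨b, rfl, rfl⟩ := (pushoutInr_eq_inl_iff _ _).1 hy.symm
    exact q.map_adj_iff.2 (p.map_adj_iff.1 hxy)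

lemma inr_eq_inl_iff (p : A ↪g B) (q : A ↪g C) {d : δ} {c : γ} :
    inr p q d = inl p q c ↔ ∃ a, q a = d ∧ p a = c :=
  pushoutInr_eq_inl_iff _ _

lemma exists_inl_or_exists_inr (p : A ↪g B) (q : A ↪g C) (s : γ ⊕ ↥(Set.range q)ᶜ) :
    (∃ c, inl p q c = s) ∨ ∃ d, inr p q d = s := by
  obtain c | ⟨d, hd⟩ := s
  · exact .inl ⟨c, rfl⟩
  · exact .inr ⟨d, pushoutInr_apply_of_notMem_range _ _ hd⟩

lemma adj_iff (p : A ↪g B) (q : A ↪g C) {s t : γ ⊕ ↥(Set.range q)ᶜ} :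
    (freeAmalgam p q).Adj s t ↔
      (∃ x y, B.Adj x y ∧ inl p q x = s ∧ inl p q y = t) ∨
      ∃ x y, C.Adj x y ∧ inr p q x = s ∧ inr p q y = t := by
  change (B.map _ ⊔ C.map _).Adj s t ↔ _
  rw [sup_adj, map_adj, map_adj]
  rfl

end freeAmalgam

end FreeAmalgam

section RealizedPatterns

variable {α V γ δ : Type*}

/-- A pattern over `α` is a set `S` of vertices of `H` and, for each vertex, a set of labels in `α`.
It is realized in `G` over `e` if the subgraph of `H` induced on `S` has a homomorphism to `G`
sending each vertex of `S` to `e a` for each of its labels `a`. -/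
def realizedPatterns (H : SimpleGraph V) (G : SimpleGraph γ) (e : α → γ) :
    Set (Set V × (V → Set α)) :=
  {P | ∃ h : H.induce P.1 →g G, ∀ v : P.1, ∀ a ∈ P.2 v, h v = e a}

lemma realizedPatterns_subset_comp (H : SimpleGraph V) {G : SimpleGraph γ} {G' : SimpleGraph δ}
    (e : α → γ) (f : G →g G') :
    realizedPatterns H G e ⊆ realizedPatterns H G' (f ∘ e) := by
  rintro P ⟨h, hlabel⟩
  exact ⟨f.comp h, fun v a ha ↦ congrArg f (hlabel v a ha)⟩

variable {A : SimpleGraph α} {B : SimpleGraph γ} {C : SimpleGraph δ}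

lemma pattern_mem_realizedPatterns_of_hom_freeAmalgam {H : SimpleGraph V} (p : A ↪g B)
    (q : A ↪g C) (φ : H →g freeAmalgam p q) :
    ({v | ∃ d, freeAmalgam.inr p q d = φ v}, fun v ↦ {a | φ v = freeAmalgam.inl p q (p a)}) ∈
      realizedPatterns H C q := by
  choose k hk using fun v : {v | ∃ d, freeAmalgam.inr p q d = φ v} ↦ v.2
  refine ⟨⟨k, fun {u v} huv ↦ ?_⟩, fun v a ha ↦ (freeAmalgam.inr p q).injective ?_⟩
  · rw [← (freeAmalgam.inr p q).map_adj_iff, hk, hk]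
    exact φ.map_adj huv
  · exact ((hk v).trans ha).trans ((freeAmalgam.inr_eq_inl_iff p q).2 ⟨a, rfl, rfl⟩).symm

theorem nonempty_hom_of_hom_freeAmalgam {H : SimpleGraph V} (p : A ↪g B) (q : A ↪g C)
    (hqp : realizedPatterns H C q ⊆ realizedPatterns H B p) (φ : H →g freeAmalgam p q) :
    Nonempty (H →g B) := by
  obtain ⟨h, hlabel⟩ := hqp (pattern_mem_realizedPatterns_of_hom_freeAmalgam p q φ)
  have reroute (v : V) : ∃ y, (∀ x, freeAmalgam.inl p q x = φ v → y = x) ∧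
      ∀ hv : ∃ d, freeAmalgam.inr p q d = φ v, y = h ⟨v, hv⟩ := by
    by_cases hv : ∃ d, freeAmalgam.inr p q d = φ v
    · refine ⟨h ⟨v, hv⟩, fun x hx ↦ ?_, fun _ ↦ rfl⟩
      obtain ⟨d, hd⟩ := id hv
      obtain ⟨a, rfl, rfl⟩ := (freeAmalgam.inr_eq_inl_iff p q).1 (hd.trans hx.symm)
      exact hlabel ⟨v, hv⟩ a hx.symm
    · obtain ⟨c, hc⟩ := (freeAmalgam.exists_inl_or_exists_inr p q (φ v)).resolve_right hv
      exact ⟨c, fun x hx ↦ (freeAmalgam.inl p q).injective (hc.trans hx.symm),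
        fun hv' ↦ absurd hv' hv⟩
  choose ψ hψ_inl hψ_inr using reroute
  refine ⟨⟨ψ, fun {u v} huv ↦ ?_⟩⟩
  obtain ⟨x, y, hxy, hx, hy⟩ | ⟨x, y, -, hx, hy⟩ :=
    (freeAmalgam.adj_iff p q).1 (φ.map_adj huv)
  · rwa [hψ_inl u x hx, hψ_inl v y hy]
  · rw [hψ_inr u ⟨x, hx⟩, hψ_inr v ⟨y, hy⟩]
    exact h.map_adj huv

end RealizedPatterns

theorem exists_extension_realizedPatterns_subset {ι : Type*} [Finite ι] {V : ι → Type*}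
    [∀ i, Finite (V i)] (F : ∀ i, SimpleGraph (V i)) (P : ∀ α : Type u, SimpleGraph α → Prop)
    {α : Type u} [Finite α] {A : SimpleGraph α} (hA : P α A) :
    ∃ (β : Type u) (_ : Finite β) (A' : SimpleGraph β) (i : A ↪g A'), P β A' ∧
      ∀ (δ : Type u) [Finite δ] (C : SimpleGraph δ), P δ C → ∀ (g : A' ↪g C) (j : ι),
        realizedPatterns (F j) C (g ∘ i) ⊆ realizedPatterns (F j) A' i := by
  let realized : Set (∀ j, Set (Set (V j) × (V j → Set α))) :=
    {R | ∃ (β : Type u) (_ : Finite β) (A' : SimpleGraph β) (i : A ↪g A'),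
      P β A' ∧ (fun j ↦ realizedPatterns (F j) A' i) = R}
  have hne : realized.Nonempty := ⟨_, α, ‹_›, A, Embedding.refl, hA, rfl⟩
  obtain ⟨_, ⟨β, hβ, A', i, hA', rfl⟩, hmax⟩ := (Set.toFinite realized).exists_maximal hne
  exact ⟨β, hβ, A', i, hA', fun δ _ C hC g ↦ hmax ⟨δ, ‹_›, C, g.comp i, hC, rfl⟩
    fun j ↦ realizedPatterns_subset_comp (F j) i g.toHom⟩

theorem graphWAP_forall_isEmpty_hom {ι : Type*} [Finite ι] {V : ι → Type*} [∀ i, Finite (V i)]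
    (F : ∀ i, SimpleGraph (V i)) : GraphWAP (fun _ G ↦ ∀ i, IsEmpty (F i →g G)) := by
  intro α _ A hA
  obtain ⟨β, _, A', i, hA', hmax⟩ := exists_extension_realizedPatterns_subset F
    (fun _ G ↦ ∀ i, IsEmpty (F i →g G)) hA
  refine ⟨β, Fintype.ofFinite β, A', i, hA', fun γ _ B hB δ _ C hC f g ↦ ?_⟩
  let p : A ↪g B := f.comp i
  let q : A ↪g C := g.comp i
  have hqp (j : ι) : realizedPatterns (F j) C q ⊆ realizedPatterns (F j) B p :=
    (hmax δ C hC g j).trans (realizedPatterns_subset_comp (F j) i f.toHom)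
  refine ⟨_, Fintype.ofFinite _, freeAmalgam p q, fun j ↦ ⟨fun φ ↦ ?_⟩, freeAmalgam.inl p q,
    freeAmalgam.inr p q, fun a ↦ ((freeAmalgam.inr_eq_inl_iff p q).2 ⟨a, rfl, rfl⟩).symm⟩
  exact not_nonempty_iff.2 (hB j) (nonempty_hom_of_hom_freeAmalgam p q (hqp j) φ)

lemma forall_not_contains_iff_forall_isEmpty_hom {ι : Type*} {V : ι → Type}
    {F : ∀ i, SimpleGraph (V i)}
    (hclosed : ∀ (i : ι) (α : Type) (A : SimpleGraph α) (f : F i →g A),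
      Function.Surjective f → ∃ j : ι, Contains (F j) A)
    {W : Type} {G : SimpleGraph W} :
    (∀ i, ¬ Contains (F i) G) ↔ ∀ i, IsEmpty (F i →g G) := by
  refine ⟨fun hG i ↦ ⟨fun φ ↦ ?_⟩, fun hG i ⟨φ, _⟩ ↦ (hG i).false φ⟩
  let image : SimpleGraph (Set.range φ) := G.induce (Set.range φ)
  let ontoImage : F i →g image := ⟨Set.rangeFactorization φ, φ.map_adj⟩
  obtain ⟨j, k, hk⟩ := hclosed i _ image ontoImage Set.rangeFactorization_surjective
  exact hG j ⟨(Embedding.induce _).toHom.comp k, Subtype.val_injective.comp hk⟩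

theorem homClosed_wap_general {ι : Type*} [Finite ι] {V : ι → Type} [∀ i, Finite (V i)]
    (F : ∀ i, SimpleGraph (V i))
    (hclosed : ∀ (i : ι) (α : Type) (A : SimpleGraph α) (f : F i →g A),
      Function.Surjective f → ∃ j : ι, Contains (F j) A) :
    GraphWAP (fun _ G => ∀ i, ¬ Contains (F i) G) := by
  simpa only [forall_not_contains_iff_forall_isEmpty_hom hclosed] using
    graphWAP_forall_isEmpty_hom F

/-- If `F` is a finite collection of finite connected graphs that is homomorphism-closed
(every surjective homomorphic image of a member of `F` contains some member of `F`),
then the class of all finite `F`-free graphs has the weak amalgamation property. -/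
theorem homClosed_wap (ι : Type) [Fintype ι]
    (V : ι → Type) (hVfin : ∀ i, Finite (V i))
    (F : ∀ i, SimpleGraph (V i))
    (hconn : ∀ i, (F i).Connected)
    (hclosed : ∀ (i : ι) (α : Type) (A : SimpleGraph α) (f : F i →g A),
      Function.Surjective f → ∃ j : ι, Contains (F j) A) :
    GraphWAP (fun _ G => ∀ i, ¬ Contains (F i) G) :=
  homClosed_wap_general F hclosed
end

section
/- Let K_linear be the class of all finite simple graphs each of whose connected components is a path (i.e., finite disjoint unions of path graphs). Then K_linear has the cofinal amalgamation property. -/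
open SimpleGraph

/-- The class of finite graphs satisfying `P` has the cofinal amalgamation property (CAP):
for every finite `A` with `P A` there are a finite `A'` with `P A'` and a graph embedding
of `A` into `A'` such that any two finite extensions `B`, `C` of `A'` in the class
amalgamate over all of `A'`. -/
def GraphCAP (P : ∀ α : Type, SimpleGraph α → Prop) : Prop :=
  ∀ (α : Type) [Fintype α], ∀ A : SimpleGraph α, P α A →
    ∃ (β : Type) (_ : Fintype β) (A' : SimpleGraph β) (_ : A ↪g A'), P β A' ∧
      ∀ (γ : Type) [Fintype γ], ∀ B : SimpleGraph γ, P γ B →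
        ∀ (δ : Type) [Fintype δ], ∀ C : SimpleGraph δ, P δ C →
          ∀ (f : A' ↪g B) (g : A' ↪g C),
            ∃ (ε : Type) (_ : Fintype ε) (D : SimpleGraph ε), P ε D ∧
              ∃ (f' : B ↪g D) (g' : C ↪g D),
                ∀ a : β, f' (f a) = g' (g a)

/-- A graph is a disjoint union of paths if each of its connected components,
as an induced subgraph, is isomorphic to a path graph. -/
def IsDisjointUnionOfPaths {α : Type} (G : SimpleGraph α) : Prop :=
  ∀ c : G.ConnectedComponent, ∃ n : ℕ,
    Nonempty ((G.induce c.supp) ≃g SimpleGraph.pathGraph n)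

/-!
A finite disjoint union of paths embeds in the two-way infinite path `hasse ℤ`: lay out the
components one after the other with gaps. Conversely, every finite part of `hasse ℤ` lies in a
finite path, so any two finite graphs embedded in `hasse ℤ` embed in a common path.

To amalgamate `B` and `C` over `A'`, it therefore suffices to place them in `hasse ℤ` so that the
two copies of `A'` agree. This is always possible when `A'` is connected, that is, a single path:
all of its embeddings in `hasse ℤ` differ by translations and reflections. Hence each `A` is first
embedded in a path.
-/

theorem hasse_int_adj {a b : ℤ} : (hasse ℤ).Adj a b ↔ |a - b| = 1 := by
  rw [hasse_adj, Order.covBy_iff_add_one_eq, Order.covBy_iff_add_one_eq]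
  grind

/-- By injectivity the walk `e 0, e 1, …` never turns back. -/
theorem exists_pathGraph_embedding_succ_sub_castSucc_eq {n : ℕ}
    (e : pathGraph (n + 1) ↪g hasse ℤ) :
    ∃ s : ℤˣ, ∀ i : Fin n, e i.succ - e i.castSucc = s := by
  have hstep (i : Fin n) : |e i.succ - e i.castSucc| = 1 := by
    rw [← hasse_int_adj, e.map_adj_iff, pathGraph_adj]
    simp
  obtain _ | n := n
  · exact ⟨1, fun i => i.elim0⟩
  obtain ⟨s, hs⟩ := Int.isUnit_iff_abs_eq.mpr (hstep 0)
  refine ⟨s, Fin.induction hs.symm fun i hi => ?_⟩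
  have hne : e i.succ.succ ≠ e i.castSucc.castSucc :=
    e.injective.ne (by simp only [ne_eq, Fin.ext_iff, Fin.val_succ, Fin.val_castSucc]; omega)
  rw [← hi]
  obtain h | h := abs_eq_abs.mp ((hstep i.succ).trans (hstep i.castSucc).symm)
  · exact h
  · rw [← Fin.succ_castSucc] at h
    exact absurd (by linarith) hne

theorem exists_pathGraph_embedding_apply_eq {n : ℕ} (e : pathGraph n ↪g hasse ℤ) :
    ∃ (a : ℤ) (s : ℤˣ), ∀ i, e i = a + s * (i : ℕ) := by
  obtain _ | n := n
  · exact ⟨0, 1, fun i => i.elim0⟩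
  obtain ⟨s, hs⟩ := exists_pathGraph_embedding_succ_sub_castSucc_eq e
  refine ⟨e 0, s, Fin.induction (by simp) fun i hi => ?_⟩
  calc e i.succ = e i.castSucc + s := by rw [← hs i]; ring
    _ = e 0 + s * (i.succ : ℕ) := by
      rw [hi, Fin.val_succ, Fin.val_castSucc]
      push_cast
      ring

/-- The affine automorphism `x ↦ s * x + t` of the two-way infinite path. -/
def hasseIntAffineIso (s : ℤˣ) (t : ℤ) : hasse ℤ ≃g hasse ℤ where
  toEquiv := s.mulLeft.trans (Equiv.addRight t)
  map_rel_iff' {x y} := by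
    have hs : |(s : ℤ)| = 1 := Int.isUnit_iff_abs_eq.mp s.isUnit
    simp [hasse_int_adj, -hasse_adj, ← mul_sub, abs_mul, hs]

theorem exists_hasse_int_iso_apply_eq {n : ℕ} (e e' : pathGraph n ↪g hasse ℤ) :
    ∃ σ : hasse ℤ ≃g hasse ℤ, ∀ i, σ (e i) = e' i := by
  obtain ⟨a, s, he⟩ := exists_pathGraph_embedding_apply_eq e
  obtain ⟨a', s', he'⟩ := exists_pathGraph_embedding_apply_eq e'
  refine ⟨hasseIntAffineIso (s' * s) (a' - s' * s * a), fun i => ?_⟩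
  have hs : (s : ℤ) * s = 1 := congrArg Units.val (Int.units_mul_self s)
  calc ((s' * s : ℤˣ) : ℤ) * e i + (a' - s' * s * a)
      = a' + s' * (s * s) * (i : ℕ) := by rw [he, Units.val_mul]; ring
    _ = e' i := by rw [hs, mul_one, he']

/-- The segment of the two-way infinite path that starts at `a` and has `n` vertices. -/
def pathGraphSegment (a : ℤ) (n : ℕ) : pathGraph n ↪g hasse ℤ where
  toFun i := a + (i : ℕ)
  inj' i j hij := by grind
  map_rel_iff' {i j} := by
    change (hasse ℤ).Adj (a + (i : ℕ)) (a + (j : ℕ)) ↔ _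
    rw [hasse_int_adj, pathGraph_adj]
    grind

theorem exists_subset_range_pathGraphSegment {s : Set ℤ} (hs : s.Finite) :
    ∃ (a : ℤ) (n : ℕ), s ⊆ Set.range (pathGraphSegment a n) := by
  obtain ⟨a, ha⟩ := hs.bddBelow
  obtain ⟨b, hb⟩ := hs.bddAbove
  refine ⟨a, (b - a + 1).toNat, fun x hx => ?_⟩
  have hax := ha hx
  have hxb := hb hx
  refine ⟨⟨(x - a).toNat, by omega⟩, ?_⟩
  change a + ((x - a).toNat : ℤ) = x
  omega

theorem exists_embedding_apply_eq_of_range_subset {U V W : Type*} {G : SimpleGraph U}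
    {H : SimpleGraph V} {K : SimpleGraph W} (f : G ↪g K) (j : H ↪g K)
    (hfj : Set.range f ⊆ Set.range j) : ∃ f' : G ↪g H, ∀ u, j (f' u) = f u := by
  choose f' hf' using fun u => hfj ⟨u, rfl⟩
  refine ⟨⟨⟨f', fun u v huv => ?_⟩, fun {u v} => ?_⟩, hf'⟩
  · exact f.injective (by rw [← hf', ← hf', huv])
  · change H.Adj (f' u) (f' v) ↔ _
    rw [← j.map_adj_iff, hf', hf', f.map_adj_iff]

/-- The fibers of `π` are moved apart by translating each of them by a different multiple of a
large number. -/
theorem exists_translation_separating_fibers {V ι : Type*} [Finite V] (π : V → ι) (p : V → ℤ)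
    (d : ℤ) : ∃ h : V → ℤ, (∀ u v, π u = π v → h u - h v = p u - p v) ∧
      ∀ u v, |h u - h v| ≤ d → π u = π v := by
  obtain ⟨N, hN⟩ := (Set.finite_range fun x : V × V => |p x.1 - p x.2|).bddAbove
  obtain ⟨k, hk⟩ := Countable.exists_injective_nat (Set.range π)
  let κ (v : V) : ℤ := k ⟨π v, v, rfl⟩
  let h (v : V) : ℤ := p v + (N + d + 1) * κ v
  refine ⟨h, fun u v huv => ?_, fun u v huv => ?_⟩
  · simp only [h, κ, huv]
    ring
  · have hp : |p u - p v| ≤ N := hN ⟨(u, v), rfl⟩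
    have hlt : |(N + d + 1) * (κ u - κ v)| < N + d + 1 := calc
      _ = |(h u - h v) - (p u - p v)| := by congr 1; simp only [h]; ring
      _ ≤ |h u - h v| + |p u - p v| := abs_sub _ _
      _ < N + d + 1 := by linarith
    have hκ : κ u - κ v = 0 :=
      (mul_eq_zero.mp (Int.eq_zero_of_abs_lt_dvd (dvd_mul_right _ _) hlt)).resolve_left
        ((abs_nonneg _).trans_lt hlt).ne'
    exact congrArg Subtype.val (hk (Int.ofNat_inj.mp (sub_eq_zero.mp hκ)))

theorem nonempty_embedding_hasse_int_of_components {V : Type*} [Finite V] {G : SimpleGraph V}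
    (φ : ∀ c : G.ConnectedComponent, G.induce c.supp ↪g hasse ℤ) : Nonempty (G ↪g hasse ℤ) := by
  let π := G.connectedComponentMk
  let p (v : V) : ℤ := φ (π v) ⟨v, rfl⟩
  have hp (c : G.ConnectedComponent) (v : c.supp) : p v = φ c v := by
    obtain ⟨v, rfl⟩ := v
    rfl
  obtain ⟨h, hsub, hsep⟩ := exists_translation_separating_fibers π p 1
  have hcomp (c : G.ConnectedComponent) (u v : c.supp) : h u - h v = φ c u - φ c v := by
    rw [hsub u v (u.2.trans v.2.symm), hp, hp]
  have hinj : Function.Injective h := fun u v huv => by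
    have hc : π v = π u := (hsep u v (by simp [huv])).symm
    have hzero := hcomp (π u) ⟨u, rfl⟩ ⟨v, hc⟩
    rw [huv, sub_self] at hzero
    exact congrArg Subtype.val ((φ (π u)).injective (sub_eq_zero.mp hzero.symm))
  have hadj (c : G.ConnectedComponent) (u v : c.supp) : |h u - h v| = 1 ↔ G.Adj u v := by
    rw [hcomp, ← hasse_int_adj, (φ c).map_adj_iff, comap_adj]
    rfl
  refine ⟨⟨⟨h, hinj⟩, fun {u v} => ?_⟩⟩
  change (hasse ℤ).Adj (h u) (h v) ↔ _
  rw [hasse_int_adj]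
  constructor
  · intro huv
    exact (hadj (π u) ⟨u, rfl⟩ ⟨v, (hsep u v huv.le).symm⟩).mp huv
  · intro huv
    exact (hadj (π u) ⟨u, rfl⟩ ⟨v, (ConnectedComponent.sound huv.reachable).symm⟩).mpr huv

theorem IsDisjointUnionOfPaths.nonempty_embedding_hasse_int {V : Type} [Finite V]
    {G : SimpleGraph V} (hG : IsDisjointUnionOfPaths G) : Nonempty (G ↪g hasse ℤ) := by
  choose n φ using hG
  exact nonempty_embedding_hasse_int_of_components fun c =>
    (pathGraphSegment 0 (n c)).comp (φ c).some.toEmbedding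

theorem isDisjointUnionOfPaths_pathGraph (n : ℕ) : IsDisjointUnionOfPaths (pathGraph n) := by
  intro c
  have := (pathGraph_preconnected n).subsingleton_connectedComponent
  have hc : c.supp = Set.univ := Set.eq_univ_of_forall fun _ => Subsingleton.elim _ _
  rw [hc]
  exact ⟨n, ⟨induceUnivIso _⟩⟩

/-- The class of all finite disjoint unions of paths has the cofinal amalgamation
property. -/
theorem linear_cap : GraphCAP (fun _ G => IsDisjointUnionOfPaths G) := by
  intro α _ A hA
  obtain ⟨h⟩ := hA.nonempty_embedding_hasse_int
  obtain ⟨a, n, hn⟩ := exists_subset_range_pathGraphSegment (Set.finite_range h)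
  obtain ⟨i, -⟩ := exists_embedding_apply_eq_of_range_subset h _ hn
  refine ⟨Fin n, inferInstance, pathGraph n, i, isDisjointUnionOfPaths_pathGraph n, ?_⟩
  intro γ _ B hB δ _ C hC f g
  obtain ⟨p⟩ := hB.nonempty_embedding_hasse_int
  obtain ⟨q⟩ := hC.nonempty_embedding_hasse_int
  obtain ⟨σ, hσ⟩ := exists_hasse_int_iso_apply_eq (p.comp f) (q.comp g)
  let p' := σ.toEmbedding.comp p
  obtain ⟨b, m, hm⟩ := exists_subset_range_pathGraphSegment
    ((Set.finite_range p').union (Set.finite_range q))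
  obtain ⟨hp, hq⟩ := Set.union_subset_iff.mp hm
  obtain ⟨f', hf'⟩ := exists_embedding_apply_eq_of_range_subset p' _ hp
  obtain ⟨g', hg'⟩ := exists_embedding_apply_eq_of_range_subset q _ hq
  refine ⟨Fin m, inferInstance, pathGraph m, isDisjointUnionOfPaths_pathGraph m, f', g',
    fun x => (pathGraphSegment b m).injective ?_⟩
  rw [hf', hg']
  exact hσ x
end
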